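/- arXiv:2112.15046 — 5 statements merged into one kernel-verified Lean document; each statement's English description precedes it below -/
import Mathlib

section
/- Let G and H be finitely generated groups, each equipped with the word metric of a finite generating set, let 𝒫 and 𝒬 be collections of subgroups of G and H respectively, and let q : (G,𝒫) → (H,𝒬) be a quasi-isometry of pairs. Let P ∈ 𝒫, Q ∈ 𝒬 and h ∈ H. If P is finitely generated and the Hausdorff distance in H between q(P) and the coset hQ is finite, then Q is finitely generated and P and Q (each with the word metric of a finite generating set) are quasi-isometric. -/
open Pointwise
open scoped ENNReal

/-- Hausdorff distance (valued in `ℝ≥0∞`) between two subsets, with respect to an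
arbitrary distance function `d`. -/
noncomputable def hdist {Y : Type*} (d : Y → Y → ℝ) (A B : Set Y) : ℝ≥0∞ :=
  max (⨆ a ∈ A, ⨅ b ∈ B, ENNReal.ofReal (d a b))
      (⨆ b ∈ B, ⨅ a ∈ A, ENNReal.ofReal (d a b))

/-- `q : X → Y` is an `(L,C)`-quasi-isometry with respect to the distance functions
`dX`, `dY`. -/
def IsQI {X Y : Type*} (dX : X → X → ℝ) (dY : Y → Y → ℝ) (L C : ℝ) (q : X → Y) : Prop :=
  1 ≤ L ∧ 0 ≤ C ∧
    (∀ x x' : X, L⁻¹ * dX x x' - C ≤ dY (q x) (q x') ∧ dY (q x) (q x') ≤ L * dX x x' + C) ∧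
    ∀ y : Y, ∃ x : X, dY y (q x) ≤ C

/-- `q : (X, 𝒜) → (Y, ℬ)` is an `(L,C,M)`-quasi-isometry of pairs. -/
def IsQIPair {X Y : Type*} (dX : X → X → ℝ) (dY : Y → Y → ℝ) (L C M : ℝ)
    (q : X → Y) (𝒜 : Set (Set X)) (ℬ : Set (Set Y)) : Prop :=
  IsQI dX dY L C q ∧
    (∀ A ∈ 𝒜, ∃ B ∈ ℬ, hdist dY (q '' A) B < ENNReal.ofReal M) ∧
    (∀ B ∈ ℬ, ∃ A ∈ 𝒜, hdist dY (q '' A) B < ENNReal.ofReal M)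

/-- A subset `B` is bounded with respect to the distance function `d`. -/
def BoundedWrt {X : Type*} (d : X → X → ℝ) (B : Set X) : Prop :=
  ∃ r : ℝ, ∀ x ∈ B, ∀ y ∈ B, d x y ≤ r

/-- A collection `𝒜` of subspaces of `X` is quasi-isometrically characteristic. -/
def IsQIChar {X : Type*} (d : X → X → ℝ) (𝒜 : Set (Set X)) : Prop :=
  (∀ L C : ℝ, 1 ≤ L → 0 ≤ C → ∃ M > (0 : ℝ),
      ∀ q : X → X, IsQI d d L C q → IsQIPair d d L C M q 𝒜 𝒜) ∧
    (∀ B : Set X, BoundedWrt d B →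
      ∃ F : Set (Set X), F.Finite ∧ F ⊆ 𝒜 ∧
        ∀ A ∈ 𝒜, (A ∩ B).Nonempty → ∃ A' ∈ F, hdist d A A' < ⊤) ∧
    (∀ A ∈ 𝒜, ∃ r : ℝ≥0∞, r < ⊤ ∧
      ∀ A₁ ∈ 𝒜, ∀ A₂ ∈ 𝒜, hdist d A A₁ < ⊤ → hdist d A A₂ < ⊤ → hdist d A₁ A₂ ≤ r)

/-- The word metric on a group `G` with respect to a generating set `S`:
`wordDist S g h` is the least `n` such that `g⁻¹ * h` is a product of `n` elements
of `S ∪ S⁻¹`. -/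
noncomputable def wordDist {G : Type*} [Group G] (S : Set G) (g h : G) : ℝ :=
  (sInf {n : ℕ | g⁻¹ * h ∈ (S ∪ S⁻¹) ^ n} : ℕ)

/-- The collection of all left cosets `gP` with `g ∈ G` and `P ∈ PP`. -/
def cosets {G : Type*} [Group G] (PP : Set (Subgroup G)) : Set (Set G) :=
  {A : Set G | ∃ g : G, ∃ P ∈ PP, A = g • (P : Set G)}

section helpers

noncomputable def wl {G : Type*} [Group G] (S : Set G) (g : G) : ℕ :=
  sInf {n : ℕ | g ∈ (S ∪ S⁻¹) ^ n}

theorem wordDist_eq {G : Type*} [Group G] (S : Set G) (g h : G) :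
    wordDist S g h = (wl S (g⁻¹ * h) : ℝ) := rfl

theorem wl_mem {G : Type*} [Group G] {S : Set G} (hS : Subgroup.closure S = ⊤) (g : G) :
    g ∈ (S ∪ S⁻¹) ^ (wl S g) := by
  have hne : {n : ℕ | g ∈ (S ∪ S⁻¹) ^ n}.Nonempty := by
    have hg : g ∈ Subgroup.closure S := by rw [hS]; trivial
    induction hg using Subgroup.closure_induction'' with
    | mem x hx => exact ⟨1, by simp [hx]⟩
    | inv_mem x hx => exact ⟨1, by simp [hx]⟩
    | one => exact ⟨0, by simp⟩
    | mul x y hx hy ihx ihy =>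
      obtain ⟨n, hn⟩ := ihx
      obtain ⟨m, hm⟩ := ihy
      refine ⟨n + m, ?_⟩
      simp only [Set.mem_ofPred_eq, pow_add] at *
      exact Set.mul_mem_mul hn hm
  exact Nat.sInf_mem hne

theorem wl_le {G : Type*} [Group G] {S : Set G} {g : G} {n : ℕ}
    (h : g ∈ (S ∪ S⁻¹) ^ n) : wl S g ≤ n := Nat.sInf_le h

theorem wl_mul {G : Type*} [Group G] {S : Set G} (hS : Subgroup.closure S = ⊤) (g h : G) :
    wl S (g * h) ≤ wl S g + wl S h := by
  apply wl_le
  rw [pow_add]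
  exact Set.mul_mem_mul (wl_mem hS g) (wl_mem hS h)

theorem wl_inv_le {G : Type*} [Group G] {S : Set G} (hS : Subgroup.closure S = ⊤) (g : G) :
    wl S g⁻¹ ≤ wl S g := by
  apply wl_le
  have h1 : (S ∪ S⁻¹)⁻¹ = S ∪ S⁻¹ := by
    rw [Set.union_inv, inv_inv, Set.union_comm]
  have h2 := wl_mem hS g
  rw [← h1, inv_pow, Set.mem_inv, inv_inv]
  exact h2

theorem wl_inv {G : Type*} [Group G] {S : Set G} (hS : Subgroup.closure S = ⊤) (g : G) :
    wl S g⁻¹ = wl S g :=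
  le_antisymm (wl_inv_le hS g) (by simpa using wl_inv_le hS g⁻¹)

theorem wl_ball {G : Type*} [Group G] {S : Set G} (hS : Subgroup.closure S = ⊤)
    (hf : S.Finite) (n : ℕ) : {g : G | wl S g ≤ n}.Finite := by
  have hpow : ∀ k : ℕ, ((S ∪ S⁻¹) ^ k).Finite := by
    intro k
    induction k with
    | zero => simp
    | succ k ih => rw [pow_succ]; exact ih.mul (hf.union hf.inv)
  refine ((Set.finite_Iic n).biUnion (fun k _ => hpow k)).subset ?_
  intro g hg
  simp only [Set.mem_iUnion]
  exact ⟨wl S g, hg, wl_mem hS g⟩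

theorem wd_nonneg {G : Type*} [Group G] (S : Set G) (a b : G) : 0 ≤ wordDist S a b := by
  rw [wordDist_eq]; positivity

theorem wd_comm {G : Type*} [Group G] {S : Set G} (hS : Subgroup.closure S = ⊤) (a b : G) :
    wordDist S a b = wordDist S b a := by
  rw [wordDist_eq, wordDist_eq, ← wl_inv hS]; simp

theorem wd_tri {G : Type*} [Group G] {S : Set G} (hS : Subgroup.closure S = ⊤) (a b c : G) :
    wordDist S a c ≤ wordDist S a b + wordDist S b c := by
  simp only [wordDist_eq]
  have := wl_mul hS (a⁻¹ * b) (b⁻¹ * c)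
  rw [show a⁻¹ * b * (b⁻¹ * c) = a⁻¹ * c by group] at this
  exact_mod_cast this

theorem wd_self {G : Type*} [Group G] (S : Set G) (a : G) : wordDist S a a = 0 := by
  have : wl S (1 : G) ≤ 0 := wl_le (by simp)
  simp only [wordDist_eq, inv_mul_cancel]
  exact_mod_cast Nat.le_zero.1 this

theorem wd_left {G : Type*} [Group G] (S : Set G) (a b c : G) :
    wordDist S (a * b) (a * c) = wordDist S b c := by
  simp only [wordDist_eq]
  rw [show (a * b)⁻¹ * (a * c) = b⁻¹ * c by group]

theorem wd_ctl {G : Type*} [Group G] {S : Set G} (hS : Subgroup.closure S = ⊤)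
    (hf : S.Finite) (P : Subgroup G) (SP : Set P) (R : ℝ) :
    ∃ K : ℝ, 0 ≤ K ∧ ∀ p p' : P, wordDist S (p : G) p' ≤ R → wordDist SP p p' ≤ K := by
  have hfin : {x : P | wl S (x : G) ≤ ⌊R⌋₊}.Finite :=
    (wl_ball hS hf ⌊R⌋₊).preimage (Subtype.val_injective.injOn)
  obtain ⟨K, hK⟩ := (hfin.image (wl SP)).bddAbove
  refine ⟨K, by positivity, fun p p' h => ?_⟩
  rw [wordDist_eq]
  refine Nat.cast_le.2 (hK ⟨p⁻¹ * p', ?_, rfl⟩)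
  rw [wordDist_eq] at h
  exact Nat.le_floor (by simpa using h)

theorem wd_gen {G : Type*} [Group G] (S : Set G) (P : Subgroup G) (SP : Set P)
    (hf : SP.Finite) :
    ∃ r : ℝ, ∀ p : P, ∀ s ∈ SP ∪ SP⁻¹, wordDist S (p : G) ((p * s : P) : G) ≤ r := by
  obtain ⟨K, hK⟩ := ((hf.union hf.inv).image (fun x : P => wl S (x : G))).bddAbove
  refine ⟨K, fun p s hs => ?_⟩
  rw [wordDist_eq]
  refine Nat.cast_le.2 (hK ⟨s, hs, ?_⟩)
  simp

theorem wd_lip {P Q : Type*} [Group P] [Group Q] {SP : Set P}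
    (hSP : Subgroup.closure SP = ⊤) {SQ : Set Q} (hSQ : Subgroup.closure SQ = ⊤)
    (φ : P → Q) (K : ℝ) (h : ∀ p, ∀ s ∈ SP ∪ SP⁻¹, wordDist SQ (φ p) (φ (p * s)) ≤ K)
    (p p' : P) : wordDist SQ (φ p) (φ p') ≤ K * wordDist SP p p' := by
  have key : ∀ n : ℕ, ∀ g ∈ (SP ∪ SP⁻¹) ^ n, ∀ p, wordDist SQ (φ p) (φ (p * g)) ≤ K * n := by
    intro n
    induction n with
    | zero =>
      intro g hg p
      have : g = 1 := by simpa using hg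
      simp [this, wd_self]
    | succ n ih =>
      intro g hg p
      rw [pow_succ] at hg
      obtain ⟨a, ha, b, hb, rfl⟩ := Set.mem_mul.1 hg
      have h1 := ih a ha p
      have h2 := h (p * a) b hb
      have h3 := wd_tri hSQ (φ p) (φ (p * a)) (φ (p * a * b))
      rw [← mul_assoc]
      push_cast
      linarith
  have := key _ _ (wl_mem hSP (p⁻¹ * p')) p
  rw [wordDist_eq SP]
  simpa using this

theorem wd_coarse_lip {G H : Type*} [Group G] [Group H] {S : Set G} {T : Set H}
    (hT : Subgroup.closure T = ⊤) (hTf : T.Finite) {P : Subgroup G} {Q : Subgroup H}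
    {SP : Set P} (hSP : Subgroup.closure SP = ⊤) (hSPf : SP.Finite)
    {SQ : Set Q} (hSQ : Subgroup.closure SQ = ⊤) (φ : P → Q)
    (hφ : ∀ R : ℝ, ∃ R' : ℝ, ∀ p p' : P, wordDist S (p : G) p' ≤ R →
      wordDist T (φ p : H) (φ p') ≤ R') :
    ∃ K : ℝ, 0 ≤ K ∧ ∀ p p' : P, wordDist SQ (φ p) (φ p') ≤ K * wordDist SP p p' := by
  obtain ⟨r, hr⟩ := wd_gen S P SP hSPf
  obtain ⟨R', hR'⟩ := hφ r
  obtain ⟨K, hK0, hK⟩ := wd_ctl hT hTf Q SQ R'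
  exact ⟨K, hK0, wd_lip hSP hSQ φ K fun p s hs => hK _ _ (hR' _ _ (hr p s hs))⟩

theorem hdist_fin {Y : Type*} (d : Y → Y → ℝ) (A B : Set Y) (h : hdist d A B < ⊤) :
    ∃ D : ℝ, 0 ≤ D ∧ (∀ a ∈ A, ∃ b ∈ B, d a b ≤ D) ∧ (∀ b ∈ B, ∃ a ∈ A, d a b ≤ D) := by
  have hlt : hdist d A B < ENNReal.ofReal ((hdist d A B).toReal + 1) := by
    rw [ENNReal.lt_ofReal_iff_toReal_lt h.ne]; linarith
  refine ⟨(hdist d A B).toReal + 1, by positivity, fun a ha => ?_, fun b hb => ?_⟩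
  · have h1 : ⨅ b ∈ B, ENNReal.ofReal (d a b) ≤ hdist d A B :=
      le_trans (le_iSup₂ (f := fun a (_ : a ∈ A) => ⨅ b ∈ B, ENNReal.ofReal (d a b)) a ha)
        (le_max_left _ _)
    have h2 := h1.trans_lt hlt
    simp only [iInf_lt_iff] at h2
    obtain ⟨b, hb, h3⟩ := h2
    exact ⟨b, hb, ((ENNReal.ofReal_lt_ofReal_iff (by positivity)).1 h3).le⟩
  · have h1 : ⨅ a ∈ A, ENNReal.ofReal (d a b) ≤ hdist d A B :=
      le_trans (le_iSup₂ (f := fun b (_ : b ∈ B) => ⨅ a ∈ A, ENNReal.ofReal (d a b)) b hb)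
        (le_max_right _ _)
    have h2 := h1.trans_lt hlt
    simp only [iInf_lt_iff] at h2
    obtain ⟨b, hb, h3⟩ := h2
    exact ⟨b, hb, ((ENNReal.ofReal_lt_ofReal_iff (by positivity)).1 h3).le⟩

end helpers

/-- If `q : (G, PP) → (H, QQ)` is a quasi-isometry of pairs of finitely
generated groups (with word metrics of finite generating sets), `P ∈ PP`, `Q ∈ QQ`,
`h ∈ H`, `P` is finitely generated and the Hausdorff distance between `q(P)` and the
coset `hQ` is finite, then `Q` is finitely generated and `P` and `Q` (each with the
word metric of a finite generating set) are quasi-isometric. -/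
theorem statement0 {G H : Type*} [Group G] [Group H]
    (S : Set G) (hSfin : S.Finite) (hSgen : Subgroup.closure S = ⊤)
    (T : Set H) (hTfin : T.Finite) (hTgen : Subgroup.closure T = ⊤)
    (PP : Set (Subgroup G)) (QQ : Set (Subgroup H))
    (q : G → H) (L C M : ℝ)
    (hq : IsQIPair (wordDist S) (wordDist T) L C M q (cosets PP) (cosets QQ))
    (P : Subgroup G) (hP : P ∈ PP) (Q : Subgroup H) (hQ : Q ∈ QQ) (h : H)
    (hPfg : P.FG)
    (hd : hdist (wordDist T) (q '' (P : Set G)) (h • (Q : Set H)) < ⊤) :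
    Q.FG ∧
      ∀ SP : Set P, SP.Finite → Subgroup.closure SP = ⊤ →
        ∀ SQ : Set Q, SQ.Finite → Subgroup.closure SQ = ⊤ →
          ∃ (f : P → Q) (L' C' : ℝ), IsQI (wordDist SP) (wordDist SQ) L' C' f := by
  obtain ⟨⟨hL, hC, hqi, -⟩, -, -⟩ := hq
  obtain ⟨D, hD0, hD1, hD2⟩ := hdist_fin _ _ _ hd
  have hf : ∀ p : P, ∃ y : Q, wordDist T (q p) (h * y) ≤ D := by
    intro p
    obtain ⟨b, hb, h1⟩ := hD1 (q p) ⟨p, p.2, rfl⟩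
    obtain ⟨y, hy, rfl⟩ := Set.mem_smul_set.1 hb
    exact ⟨⟨y, hy⟩, h1⟩
  have hg : ∀ y : Q, ∃ p : P, wordDist T (q p) (h * y) ≤ D := by
    intro y
    obtain ⟨a, ⟨p, hp, rfl⟩, h1⟩ := hD2 (h * y) (Set.mem_smul_set.2 ⟨y, y.2, rfl⟩)
    exact ⟨⟨p, hp⟩, h1⟩
  choose f hf using hf
  choose g hg using hg
  -- upper control
  have up : ∀ (p p' : P) (y y' : Q), wordDist T (q p) (h * y) ≤ D →
      wordDist T (q p') (h * y') ≤ D →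
      wordDist T (y : H) y' ≤ L * wordDist S (p : G) p' + (C + 2 * D) := by
    intro p p' y y' h1 h2
    have h3 := (hqi p p').2
    have h4 := wd_tri hTgen (h * y) (q p) (h * y')
    have h5 := wd_tri hTgen (q p) (q p') (h * y')
    rw [wd_comm hTgen (h * y) (q p)] at h4
    rw [wd_left] at h4
    linarith
  have down : ∀ (p p' : P) (y y' : Q), wordDist T (q p) (h * y) ≤ D →
      wordDist T (q p') (h * y') ≤ D →
      wordDist S (p : G) p' ≤ L * (wordDist T (y : H) y' + (C + 2 * D)) := by
    intro p p' y y' h1 h2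
    have h3 := (hqi p p').1
    have h4 := wd_tri hTgen (q p) (h * y) (q p')
    have h5 := wd_tri hTgen (h * y) (h * y') (q p')
    rw [wd_left, wd_comm hTgen (h * y') (q p')] at h5
    rw [← inv_mul_le_iff₀ (by linarith)]
    linarith
  have hfc : ∀ R : ℝ, ∃ R' : ℝ, ∀ p p' : P, wordDist S (p : G) p' ≤ R →
      wordDist T (f p : H) (f p') ≤ R' := by
    intro R
    refine ⟨L * R + (C + 2 * D), fun p p' hR => (up p p' _ _ (hf p) (hf p')).trans ?_⟩
    gcongr
  have hgc : ∀ R : ℝ, ∃ R' : ℝ, ∀ y y' : Q, wordDist T (y : H) y' ≤ R →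
      wordDist S (g y : G) (g y') ≤ R' := by
    intro R
    refine ⟨L * (R + (C + 2 * D)), fun y y' hR => (down _ _ y y' (hg y) (hg y')).trans ?_⟩
    gcongr
  have hfg : ∀ y : Q, wordDist T (f (g y) : H) y ≤ C + 2 * D := by
    intro y
    have := up (g y) (g y) _ y (hf _) (hg y)
    rw [wd_self] at this
    linarith
  have hgf : ∀ p : P, wordDist S (g (f p) : G) p ≤ L * (C + 2 * D) := by
    intro p
    have := down (g (f p)) p _ _ (hg _) (hf p)
    rw [wd_self] at this
    linarith
  constructor
  · rw [← Group.fg_iff_subgroup_fg]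
    have hPfg' := (Group.fg_iff_subgroup_fg P).2 hPfg
    obtain ⟨SP, hSP, hSPf⟩ := Group.fg_iff.1 hPfg'
    obtain ⟨r, hr⟩ := wd_gen S P SP hSPf
    obtain ⟨R', hR'⟩ := hfc r
    set N : ℕ := ⌊max R' (C + 2 * D)⌋₊ with hN
    set F : Set Q := {x : Q | wl T (x : H) ≤ N} with hF
    have hFfin : F.Finite :=
      (wl_ball hTgen hTfin N).preimage (Subtype.val_injective.injOn)
    have hmem : ∀ y y' : Q, wordDist T (y : H) y' ≤ max R' (C + 2 * D) →
        y⁻¹ * y' ∈ Subgroup.closure F := by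
      intro y y' h1
      apply Subgroup.subset_closure
      rw [wordDist_eq] at h1
      exact Nat.le_floor (by simpa using h1)
    have key : ∀ n : ℕ, ∀ p ∈ (SP ∪ SP⁻¹) ^ n, (f 1)⁻¹ * f p ∈ Subgroup.closure F := by
      intro n
      induction n with
      | zero =>
        intro p hp
        have : p = 1 := by simpa using hp
        simp [this]
      | succ n ih =>
        intro p hp
        rw [pow_succ] at hp
        obtain ⟨a, ha, b, hb, rfl⟩ := Set.mem_mul.1 hp
        have h1 := ih a ha
        have h2 := hmem (f a) (f (a * b)) ((hR' _ _ (hr a b hb)).trans (le_max_left _ _))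
        have := mul_mem h1 h2
        rwa [show (f 1)⁻¹ * f a * ((f a)⁻¹ * f (a * b)) = (f 1)⁻¹ * f (a * b) by group] at this
    have key2 : ∀ y : Q, (f 1)⁻¹ * y ∈ Subgroup.closure F := by
      intro y
      have h1 := key _ _ (wl_mem hSP (g y))
      have h2 := hmem (f (g y)) y ((hfg y).trans (le_max_right _ _))
      have := mul_mem h1 h2
      rwa [show (f 1)⁻¹ * f (g y) * ((f (g y))⁻¹ * y) = (f 1)⁻¹ * y by group] at this
    refine Group.fg_iff.2 ⟨F, ?_, hFfin⟩
    rw [eq_top_iff]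
    intro y _
    have h1 := key2 1
    have h2 := key2 y
    have := mul_mem (inv_mem h1) h2
    rwa [show ((f 1)⁻¹ * 1)⁻¹ * ((f 1)⁻¹ * y) = y by group] at this
  · intro SP hSPf hSP SQ hSQf hSQ
    obtain ⟨K1, hK1, h1⟩ := wd_coarse_lip hTgen hTfin hSP hSPf hSQ f hfc
    obtain ⟨K2, hK2, h2⟩ := wd_coarse_lip hSgen hSfin hSQ hSQf hSP g hgc
    obtain ⟨C1, hC1, h3⟩ := wd_ctl hSgen hSfin P SP (L * (C + 2 * D))
    obtain ⟨C2, hC2, h4⟩ := wd_ctl hTgen hTfin Q SQ (C + 2 * D)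
    refine ⟨f, K1 + K2 + 1, 2 * C1 + C2, by linarith, by linarith, fun p p' => ⟨?_, ?_⟩, fun y => ?_⟩
    · have a1 := h3 _ _ (hgf p)
      have a2 := h3 _ _ (hgf p')
      have a3 := h2 (f p) (f p')
      have a4 := wd_tri hSP p (g (f p)) p'
      have a5 := wd_tri hSP (g (f p)) (g (f p')) p'
      rw [wd_comm hSP p (g (f p))] at a4
      have a6 : wordDist SP p p' ≤ K2 * wordDist SQ (f p) (f p') + 2 * C1 := by linarith
      have a7 := wd_nonneg SQ (f p) (f p')
      rw [sub_le_iff_le_add, inv_mul_le_iff₀ (by linarith)]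
      nlinarith [mul_nonneg hK1 a7, mul_nonneg hK1 hC1, mul_nonneg hK1 hC2, mul_nonneg hK2 hC1, mul_nonneg hK2 hC2]
    · have := h1 p p'
      have a7 := wd_nonneg SP p p'
      nlinarith [mul_nonneg hK2 a7]
    · refine ⟨g y, ?_⟩
      rw [wd_comm hSQ]
      have := h4 _ _ (hfg y)
      linarith
end

section
/- Let G be a finitely generated group equipped with the word metric of a finite generating set, and let 𝒫 be a finite qi-characteristic collection of subgroups of G. If H is a finitely generated group (with the word metric of a finite generating set) and q : G → H is a quasi-isometry, then there is a qi-characteristic collection of subgroups 𝒬 of H such that q : (G,𝒫) → (H,𝒬) is a quasi-isometry of pairs. -/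
open Pointwise
open scoped ENNReal

structure PM {X : Type*} (d : X → X → ℝ) : Prop where
  self : ∀ x, d x x = 0
  symm : ∀ x y, d x y = d y x
  tri : ∀ x y z, d x z ≤ d x y + d y z

theorem PM.nonneg {X : Type*} {d : X → X → ℝ} (h : PM d) (x y : X) : 0 ≤ d x y := by
  have h1 := h.tri x y x
  rw [h.self, h.symm y x] at h1
  linarith

def HN {X : Type*} (d : X → X → ℝ) (D : ℝ) (A B : Set X) : Prop :=
  (∀ a ∈ A, ∃ b ∈ B, d a b ≤ D) ∧ (∀ b ∈ B, ∃ a ∈ A, d a b ≤ D)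

theorem HN.hdist_le {X : Type*} {d : X → X → ℝ} {D : ℝ} {A B : Set X} (h : HN d D A B) :
    hdist d A B ≤ ENNReal.ofReal D := by
  unfold hdist
  refine max_le (iSup₂_le fun a ha => ?_) (iSup₂_le fun b hb => ?_)
  · obtain ⟨b, hb, hd⟩ := h.1 a ha
    exact (iInf₂_le b hb).trans (ENNReal.ofReal_le_ofReal hd)
  · obtain ⟨a, ha, hd⟩ := h.2 b hb
    exact (iInf₂_le a ha).trans (ENNReal.ofReal_le_ofReal hd)

theorem HN.of_hdist_lt {X : Type*} {d : X → X → ℝ} {D : ℝ} {A B : Set X}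
    (h : hdist d A B < ENNReal.ofReal D) : HN d D A B := by
  unfold hdist at h
  obtain ⟨h1, h2⟩ := max_lt_iff.1 h
  have key : ∀ x : ℝ, ENNReal.ofReal x < ENNReal.ofReal D → x ≤ D := by
    intro x hx
    by_contra hc
    exact absurd (ENNReal.ofReal_le_ofReal (le_of_lt (not_le.1 hc))) (not_le.2 hx)
  constructor
  · intro a ha
    have h3 : (⨅ b ∈ B, ENNReal.ofReal (d a b)) < ENNReal.ofReal D :=
      lt_of_le_of_lt (le_iSup₂ (f := fun a (_ : a ∈ A) => ⨅ b ∈ B, ENNReal.ofReal (d a b)) a ha) h1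
    simp only [iInf_lt_iff] at h3
    obtain ⟨b, hb, hd⟩ := h3
    exact ⟨b, hb, key _ hd⟩
  · intro b hb
    have h3 : (⨅ a ∈ A, ENNReal.ofReal (d a b)) < ENNReal.ofReal D :=
      lt_of_le_of_lt (le_iSup₂ (f := fun b (_ : b ∈ B) => ⨅ a ∈ A, ENNReal.ofReal (d a b)) b hb) h2
    simp only [iInf_lt_iff] at h3
    obtain ⟨a, ha, hd⟩ := h3
    exact ⟨a, ha, key _ hd⟩

theorem HN.of_le {X : Type*} {d : X → X → ℝ} {r : ℝ≥0∞} (hr : r < ⊤) {A B : Set X}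
    (h : hdist d A B ≤ r) : HN d (r.toReal + 1) A B := by
  apply HN.of_hdist_lt
  refine lt_of_le_of_lt h ?_
  rw [ENNReal.lt_ofReal_iff_toReal_lt hr.ne]
  linarith

theorem HN.hdist_lt {X : Type*} {d : X → X → ℝ} {D : ℝ} {A B : Set X} (h : HN d D A B) :
    hdist d A B < ENNReal.ofReal (|D| + 1) := by
  refine lt_of_le_of_lt h.hdist_le ?_
  rw [ENNReal.ofReal_lt_ofReal_iff (by positivity)]
  linarith [le_abs_self D]

def CE {X : Type*} (d : X → X → ℝ) (A B : Set X) : Prop := ∃ D, HN d D A B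

theorem HN.ce {X : Type*} {d : X → X → ℝ} {D : ℝ} {A B : Set X} (h : HN d D A B) : CE d A B :=
  ⟨D, h⟩

theorem ce_iff {X : Type*} {d : X → X → ℝ} {A B : Set X} : hdist d A B < ⊤ ↔ CE d A B :=
  ⟨fun h => ⟨_, HN.of_le h le_rfl⟩,
    fun ⟨_, h⟩ => lt_of_le_of_lt h.hdist_le ENNReal.ofReal_lt_top⟩

theorem HN.mono {X : Type*} {d : X → X → ℝ} {D E : ℝ} {A B : Set X} (h : HN d D A B)
    (hDE : D ≤ E) : HN d E A B :=
  ⟨fun a ha => let ⟨b, hb, hd⟩ := h.1 a ha; ⟨b, hb, hd.trans hDE⟩,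
   fun a ha => let ⟨b, hb, hd⟩ := h.2 a ha; ⟨b, hb, hd.trans hDE⟩⟩

theorem HN.symm {X : Type*} {d : X → X → ℝ} (hd : PM d) {D : ℝ} {A B : Set X} (h : HN d D A B) :
    HN d D B A :=
  ⟨fun b hb => let ⟨a, ha, h'⟩ := h.2 b hb; ⟨a, ha, (hd.symm b a).le.trans h'⟩,
   fun a ha => let ⟨b, hb, h'⟩ := h.1 a ha; ⟨b, hb, (hd.symm b a).le.trans h'⟩⟩

theorem HN.trans {X : Type*} {d : X → X → ℝ} (hd : PM d) {D E : ℝ} {A B B' : Set X}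
    (h : HN d D A B) (h' : HN d E B B') : HN d (D + E) A B' := by
  constructor
  · intro a ha
    obtain ⟨b, hb, h1⟩ := h.1 a ha
    obtain ⟨c, hc, h2⟩ := h'.1 b hb
    exact ⟨c, hc, (hd.tri a b c).trans (add_le_add h1 h2)⟩
  · intro c hc
    obtain ⟨b, hb, h2⟩ := h'.2 c hc
    obtain ⟨a, ha, h1⟩ := h.2 b hb
    exact ⟨a, ha, (hd.tri a b c).trans (add_le_add h1 h2)⟩

theorem CE.symm {X : Type*} {d : X → X → ℝ} (hd : PM d) {A B : Set X} (h : CE d A B) :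
    CE d B A := let ⟨_, h⟩ := h; (h.symm hd).ce

theorem CE.trans {X : Type*} {d : X → X → ℝ} (hd : PM d) {A B B' : Set X} (h : CE d A B)
    (h' : CE d B B') : CE d A B' := let ⟨_, h⟩ := h; let ⟨_, h'⟩ := h'; (h.trans hd h').ce

theorem CE.refl {X : Type*} {d : X → X → ℝ} (hd : PM d) (A : Set X) : CE d A A :=
  ⟨0, fun a ha => ⟨a, ha, (hd.self a).le⟩, fun a ha => ⟨a, ha, (hd.self a).le⟩⟩

theorem HN.of_close {X Y : Type*} {d : Y → Y → ℝ} {K : ℝ} {f g : X → Y}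
    (h : ∀ x, d (f x) (g x) ≤ K) (A : Set X) : HN d K (f '' A) (g '' A) := by
  constructor
  · rintro _ ⟨a, ha, rfl⟩
    exact ⟨_, ⟨a, ha, rfl⟩, h a⟩
  · rintro _ ⟨a, ha, rfl⟩
    exact ⟨_, ⟨a, ha, rfl⟩, h a⟩

section qi
variable {X Y Z : Type*} {dX : X → X → ℝ} {dY : Y → Y → ℝ} {dZ : Z → Z → ℝ}
  {L C L' C' : ℝ} {q : X → Y}

theorem IsQI.up (h : IsQI dX dY L C q) {x x' : X} {D : ℝ} (hD : dX x x' ≤ D) :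
    dY (q x) (q x') ≤ L * D + C := by
  have := (h.2.2.1 x x').2
  have h1 := mul_le_mul_of_nonneg_left hD (by linarith [h.1] : 0 ≤ L)
  linarith

theorem IsQI.down (h : IsQI dX dY L C q) {x x' : X} {D : ℝ} (hD : dY (q x) (q x') ≤ D) :
    dX x x' ≤ L * (D + C) := by
  have := (h.2.2.1 x x').1
  have hL : 0 < L := by linarith [h.1]
  have h2 : L⁻¹ * dX x x' ≤ D + C := by linarith
  rwa [inv_mul_le_iff₀ hL] at h2

theorem HN.image (h : IsQI dX dY L C q) {D : ℝ} {A B : Set X} (hA : HN dX D A B) :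
    HN dY (L * D + C) (q '' A) (q '' B) := by
  constructor
  · rintro _ ⟨a, ha, rfl⟩
    obtain ⟨b, hb, hd⟩ := hA.1 a ha
    exact ⟨_, ⟨b, hb, rfl⟩, h.up hd⟩
  · rintro _ ⟨b, hb, rfl⟩
    obtain ⟨a, ha, hd⟩ := hA.2 b hb
    exact ⟨_, ⟨a, ha, rfl⟩, h.up hd⟩

theorem HN.preim (h : IsQI dX dY L C q) {D : ℝ} {A B : Set X} (hA : HN dY D (q '' A) (q '' B)) :
    HN dX (L * (D + C)) A B := by
  constructor
  · intro a ha
    obtain ⟨_, ⟨b, hb, rfl⟩, hd⟩ := hA.1 _ ⟨a, ha, rfl⟩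
    exact ⟨b, hb, h.down hd⟩
  · intro a ha
    obtain ⟨_, ⟨b, hb, rfl⟩, hd⟩ := hA.2 _ ⟨a, ha, rfl⟩
    exact ⟨b, hb, h.down hd⟩

theorem CE.image (h : IsQI dX dY L C q) {A B : Set X} (hA : CE dX A B) :
    CE dY (q '' A) (q '' B) := let ⟨_, h'⟩ := hA; (h'.image h).ce

theorem CE.preim (h : IsQI dX dY L C q) {A B : Set X} (hA : CE dY (q '' A) (q '' B)) :
    CE dX A B := let ⟨_, h'⟩ := hA; (h'.preim h).ce

theorem IsQI.of_bounds (hX : PM dX) {a b c e : ℝ} (ha : 1 ≤ a) (hb : 0 ≤ b)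
    (h1 : ∀ x x', dY (q x) (q x') ≤ a * dX x x' + b)
    (h2 : ∀ x x', dX x x' ≤ a * (dY (q x) (q x') + c)) (hc : 0 ≤ c)
    (he : 0 ≤ e) (h3 : ∀ y, ∃ x, dY y (q x) ≤ e) : IsQI dX dY a (b + c + e) q := by
  refine ⟨ha, by linarith, fun x x' => ⟨?_, by linarith [h1 x x']⟩, fun y => ?_⟩
  · have h0 : 0 < a := by linarith
    have := h2 x x'
    rw [← inv_mul_le_iff₀ h0] at this
    linarith
  · obtain ⟨x, hx⟩ := h3 y
    exact ⟨x, by linarith⟩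

theorem IsQI.comp (hX : PM dX) (hZ : PM dZ) {g : Y → Z} (hg : IsQI dY dZ L' C' g)
    (hf : IsQI dX dY L C q) :
    IsQI dX dZ (L' * L) ((L' * C + C') + (C + C') + (C' + (L' * C + C'))) (g ∘ q) := by
  have hL := hf.1
  have hC := hf.2.1
  have hL' := hg.1
  have hC' := hg.2.1
  have h0 : 0 ≤ L' * C := mul_nonneg (by linarith) hC
  refine IsQI.of_bounds hX (by nlinarith) (by linarith) ?_ ?_ (by linarith) (by linarith) ?_
  · intro x x'
    have := hg.up (hf.up (le_refl (dX x x')))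
    simp only [Function.comp]
    linarith
  · intro x x'
    have := hf.down (hg.down (le_refl (dZ (g (q x)) (g (q x')))))
    simp only [Function.comp]
    have h5 : 0 ≤ L * (C * (L' - 1)) := by
      refine mul_nonneg (by linarith) (mul_nonneg hC (by linarith))
    nlinarith
  · intro z
    obtain ⟨y, hy⟩ := hg.2.2.2 z
    obtain ⟨x, hx⟩ := hf.2.2.2 y
    exact ⟨x, (hZ.tri _ (g y) _).trans (add_le_add hy (hg.up hx))⟩

theorem IsQI.inv (hX : PM dX) (hY : PM dY) (hq : IsQI dX dY L C q) :
    ∃ (p : Y → X) (L' C' K : ℝ), IsQI dY dX L' C' p ∧ (∀ x, dX (p (q x)) x ≤ K) ∧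
      ∀ y, dY (q (p y)) y ≤ K := by
  choose p hp using hq.2.2.2
  have hL := hq.1
  have hC := hq.2.1
  have hLC : 0 ≤ L * C := mul_nonneg (by linarith) hC
  have h1 : ∀ x, dX x (p (q x)) ≤ L * (C + C) := fun x => hq.down (hp (q x))
  refine ⟨p, L, _, L * (C + C) + C, IsQI.of_bounds hY (b := L * (3 * C)) (c := 3 * C)
    (e := L * (C + C)) hL (by linarith) ?_ ?_ (by linarith) (by linarith) ?_, ?_, ?_⟩
  · intro y y'
    have h2 : dY (q (p y)) (q (p y')) ≤ dY y y' + 2 * C := by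
      have := hY.tri (q (p y)) y (q (p y'))
      have := hY.tri y y' (q (p y'))
      have := hp y
      have := hp y'
      have := hY.symm y (q (p y))
      linarith
    have := hq.down h2
    linarith
  · intro y y'
    have h2 := hq.up (le_refl (dX (p y) (p y')))
    have := hY.tri y (q (p y)) y'
    have := hY.tri (q (p y)) (q (p y')) y'
    have := hp y
    have := hp y'
    have := hY.symm y' (q (p y'))
    nlinarith
  · intro x
    exact ⟨q x, h1 x⟩
  · intro x
    have := h1 x
    rw [hX.symm] at this
    linarith
  · intro y
    have := hp y
    rw [hY.symm] at this
    linarith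

theorem qichar_transfer (hX : PM dX) (hY : PM dY) (hq : IsQI dX dY L C q)
    {𝒜 : Set (Set X)} {ℬ : Set (Set Y)} (h𝒜 : IsQIChar dX 𝒜) {M : ℝ}
    (hAB : ∀ A ∈ 𝒜, ∃ B ∈ ℬ, HN dY M (q '' A) B)
    (hBA : ∀ B ∈ ℬ, ∃ A ∈ 𝒜, HN dY M (q '' A) B) : IsQIChar dY ℬ := by
  obtain ⟨p, Lp, Cp, K, hp, hpq, hqp⟩ := hq.inv hX hY
  refine ⟨?_, ?_, ?_⟩
  · intro L₁ C₁ hL₁ hC₁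
    obtain ⟨L₂, C₂, hcomp⟩ : ∃ L₂ C₂, ∀ f : Y → Y, IsQI dY dY L₁ C₁ f →
        IsQI dX dX L₂ C₂ (p ∘ (f ∘ q)) :=
      ⟨_, _, fun f hf => hp.comp hX hX (hf.comp hX hY hq)⟩
    by_cases hne : 1 ≤ L₂ ∧ 0 ≤ C₂
    swap
    · refine ⟨1, one_pos, fun f hf => ?_⟩
      exact absurd ⟨(hcomp f hf).1, (hcomp f hf).2.1⟩ hne
    obtain ⟨M₂, hM₂, hM⟩ := h𝒜.1 L₂ C₂ hne.1 hne.2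
    -- closeness of `f q A` to `q A'`
    have step : ∀ f : Y → Y, ∀ A A', HN dX M₂ ((p ∘ (f ∘ q)) '' A) A' →
        HN dY (K + (L * M₂ + C)) (f '' (q '' A)) (q '' A') := by
      intro f A A' h
      have h1 := h.image hq
      have h2 : HN dY K (q '' ((p ∘ (f ∘ q)) '' A)) (f '' (q '' A)) := by
        rw [Set.image_image, Set.image_image]
        exact HN.of_close (fun x => hqp _) A
      exact (h2.symm hY).trans hY h1
    set E : ℝ := (L₁ * M + C₁) + (K + (L * M₂ + C)) + M with hE
    refine ⟨|E| + 1, by positivity, fun f hf => ⟨hf, ?_, ?_⟩⟩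
    · intro B hB
      obtain ⟨A, hA, h1⟩ := hBA B hB
      obtain ⟨A', hA', h2⟩ := (hM _ (hcomp f hf)).2.1 A hA
      obtain ⟨B', hB', h3⟩ := hAB A' hA'
      refine ⟨B', hB', HN.hdist_lt ?_⟩
      exact (((h1.symm hY).image hf).trans hY (step f A A' (HN.of_hdist_lt h2))).trans hY h3
    · intro B' hB'
      obtain ⟨A', hA', h3⟩ := hBA B' hB'
      obtain ⟨A, hA, h2⟩ := (hM _ (hcomp f hf)).2.2 A' hA'
      obtain ⟨B, hB, h1⟩ := hAB A hA
      refine ⟨B, hB, HN.hdist_lt ?_⟩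
      exact (((h1.symm hY).image hf).trans hY (step f A A' (HN.of_hdist_lt h2))).trans hY h3
  · rintro S ⟨r, hr⟩
    obtain ⟨F, hF, hFA, hF2⟩ := h𝒜.2.1 {x | ∃ s ∈ S, dY (q x) s ≤ M} ⟨L * (M + r + M + C), by
      rintro x ⟨s, hs, hxs⟩ y ⟨t, ht, hyt⟩
      apply hq.down
      have := hr s hs t ht
      have := hY.tri (q x) s (q y)
      have := hY.tri s t (q y)
      rw [hY.symm t] at this
      linarith⟩
    have : ∀ A, ∃ B, A ∈ 𝒜 → B ∈ ℬ ∧ HN dY M (q '' A) B := by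
      intro A
      by_cases hA : A ∈ 𝒜
      · obtain ⟨B, h⟩ := hAB A hA
        exact ⟨B, fun _ => h⟩
      · exact ⟨∅, fun h => absurd h hA⟩
    choose b hb using this
    refine ⟨b '' F, hF.image b, ?_, ?_⟩
    · rintro _ ⟨A, hA, rfl⟩
      exact (hb A (hFA hA)).1
    · rintro B hB ⟨y, hyB, hyS⟩
      obtain ⟨A, hA, h1⟩ := hBA B hB
      obtain ⟨_, ⟨a, ha, rfl⟩, h2⟩ := h1.2 y hyB
      obtain ⟨A', hA', h3⟩ := hF2 A hA ⟨a, ha, y, hyS, h2⟩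
      refine ⟨b A', ⟨A', hA', rfl⟩, ?_⟩
      rw [ce_iff] at h3 ⊢
      exact ((h1.symm hY).ce.trans hY (h3.image hq)).trans hY (hb A' (hFA hA')).2.ce
  · intro B hB
    obtain ⟨A, hA, h1⟩ := hBA B hB
    obtain ⟨r, hr, hr2⟩ := h𝒜.2.2 A hA
    refine ⟨ENNReal.ofReal (M + (L * (r.toReal + 1) + C) + M), ENNReal.ofReal_lt_top, ?_⟩
    intro B₁ hB₁ B₂ hB₂ e₁ e₂
    rw [ce_iff] at e₁ e₂
    obtain ⟨A₁, hA₁, f₁⟩ := hBA B₁ hB₁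
    obtain ⟨A₂, hA₂, f₂⟩ := hBA B₂ hB₂
    have g₁ : CE dX A A₁ := ((h1.ce.trans hY e₁).trans hY (f₁.symm hY).ce).preim hq
    have g₂ : CE dX A A₂ := ((h1.ce.trans hY e₂).trans hY (f₂.symm hY).ce).preim hq
    have := hr2 A₁ hA₁ A₂ hA₂ (ce_iff.2 g₁) (ce_iff.2 g₂)
    exact (((f₁.symm hY).trans hY ((HN.of_le hr this).image hq)).trans hY f₂).hdist_le

end qi

section word
variable {G : Type*} [Group G] {S : Set G}

theorem word_nonempty (hS : Subgroup.closure S = ⊤) (g : G) :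
    ∃ n : ℕ, g ∈ (S ∪ S⁻¹) ^ n := by
  have hg : g ∈ Subgroup.closure S := hS ▸ Subgroup.mem_top g
  induction hg using Subgroup.closure_induction with
  | mem x hx => exact ⟨1, by rw [pow_one]; exact Or.inl hx⟩
  | one => exact ⟨0, by simp⟩
  | mul x y _ _ hx hy =>
    obtain ⟨n, hn⟩ := hx
    obtain ⟨m, hm⟩ := hy
    exact ⟨n + m, by rw [pow_add]; exact Set.mul_mem_mul hn hm⟩
  | inv x _ hx =>
    obtain ⟨n, hn⟩ := hx
    refine ⟨n, ?_⟩
    have : ((S ∪ S⁻¹) ^ n)⁻¹ = (S ∪ S⁻¹) ^ n := by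
      rw [← inv_pow, Set.union_inv, inv_inv, Set.union_comm]
    rw [← this]
    exact Set.inv_mem_inv.2 hn

theorem word_inv (n : ℕ) (x : G) (h : x ∈ (S ∪ S⁻¹) ^ n) : x⁻¹ ∈ (S ∪ S⁻¹) ^ n := by
  have : ((S ∪ S⁻¹) ^ n)⁻¹ = (S ∪ S⁻¹) ^ n := by
    rw [← inv_pow, Set.union_inv, inv_inv, Set.union_comm]
  rw [← this]
  exact Set.inv_mem_inv.2 h

theorem word_pm (hS : Subgroup.closure S = ⊤) : PM (wordDist S) where
  self x := by
    unfold wordDist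
    norm_cast
    rw [Nat.sInf_eq_zero]
    left
    simp
  symm x y := by
    unfold wordDist
    congr 3
    ext n
    constructor <;> intro h <;> have := word_inv n _ h <;> simpa using this
  tri x y z := by
    unfold wordDist
    norm_cast
    apply Nat.sInf_le
    have h1 : sInf {n : ℕ | x⁻¹ * y ∈ (S ∪ S⁻¹) ^ n} ∈ {n : ℕ | x⁻¹ * y ∈ (S ∪ S⁻¹) ^ n} :=
      Nat.sInf_mem (word_nonempty hS _)
    have h2 : sInf {n : ℕ | y⁻¹ * z ∈ (S ∪ S⁻¹) ^ n} ∈ {n : ℕ | y⁻¹ * z ∈ (S ∪ S⁻¹) ^ n} :=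
      Nat.sInf_mem (word_nonempty hS _)
    rw [Set.mem_setOf_eq] at h1 h2
    have h3 := Set.mul_mem_mul h1 h2
    rw [← pow_add] at h3
    have h4 : x⁻¹ * y * (y⁻¹ * z) = x⁻¹ * z := by group
    rw [h4] at h3
    exact h3

theorem word_left (g x y : G) : wordDist S (g * x) (g * y) = wordDist S x y := by
  unfold wordDist
  congr 3
  ext n
  simp [mul_assoc]

theorem HN.smul {D : ℝ} {A B : Set G} (h : HN (wordDist S) D A B) (g : G) :
    HN (wordDist S) D (g • A) (g • B) := by
  constructor
  · rintro _ ⟨a, ha, rfl⟩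
    obtain ⟨b, hb, hd⟩ := h.1 a ha
    exact ⟨_, ⟨b, hb, rfl⟩, by simpa [word_left] using hd⟩
  · rintro _ ⟨a, ha, rfl⟩
    obtain ⟨b, hb, hd⟩ := h.2 a ha
    exact ⟨_, ⟨b, hb, rfl⟩, by simpa [word_left] using hd⟩

theorem CE.smul {A B : Set G} (h : CE (wordDist S) A B) (g : G) :
    CE (wordDist S) (g • A) (g • B) := let ⟨_, h⟩ := h; (h.smul g).ce

theorem left_qi (hS : Subgroup.closure S = ⊤) (g : G) :
    IsQI (wordDist S) (wordDist S) 1 0 (fun x => g * x) := by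
  refine ⟨le_rfl, le_rfl, fun x x' => ?_, fun y => ⟨g⁻¹ * y, ?_⟩⟩
  · simp [word_left]
  · simp [(word_pm hS).self]

def stabCE (hS : Subgroup.closure S = ⊤) (A : Set G) : Subgroup G where
  carrier := {h | CE (wordDist S) (h • A) A}
  one_mem' := by simpa using CE.refl (word_pm hS) A
  mul_mem' := by
    intro a b ha hb
    have h1 := CE.smul hb a
    rw [smul_smul] at h1
    exact h1.trans (word_pm hS) ha
  inv_mem' := by
    intro a ha
    have h1 := CE.smul ha a⁻¹
    rw [smul_smul, inv_mul_cancel, one_smul] at h1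
    exact h1.symm (word_pm hS)

theorem cosets_smul {PP : Set (Subgroup G)} {A : Set G} (hA : A ∈ cosets PP) (g : G) :
    g • A ∈ cosets PP := by
  obtain ⟨x, P, hP, rfl⟩ := hA
  exact ⟨g * x, P, hP, by rw [smul_smul]⟩

theorem uniform_r (hS : Subgroup.closure S = ⊤) {PP : Set (Subgroup G)} (hf : PP.Finite)
    (h : IsQIChar (wordDist S) (cosets PP)) :
    ∃ r : ℝ, ∀ A ∈ cosets PP, ∀ A' ∈ cosets PP, CE (wordDist S) A A' →
      HN (wordDist S) r A A' := by
  have : ∀ P : Subgroup G, ∃ r : ℝ, P ∈ PP → ∀ A' ∈ cosets PP,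
      CE (wordDist S) (P : Set G) A' → HN (wordDist S) r P A' := by
    intro P
    by_cases hP : P ∈ PP
    · have hP' : (P : Set G) ∈ cosets PP := ⟨1, P, hP, by simp⟩
      obtain ⟨r, hr, h2⟩ := h.2.2 P hP'
      refine ⟨r.toReal + 1, fun _ A' hA' hc => HN.of_le hr ?_⟩
      exact h2 _ hP' A' hA' (ce_iff.2 (CE.refl (word_pm hS) _)) (ce_iff.2 hc)
    · exact ⟨0, fun h => absurd h hP⟩
  choose r hr using this
  obtain ⟨R, hR⟩ := (hf.image r).bddAbove
  refine ⟨R, ?_⟩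
  rintro _ ⟨g, P, hP, rfl⟩ A' hA' hc
  have h1 := hc.smul g⁻¹
  rw [smul_smul, inv_mul_cancel, one_smul] at h1
  have h2 := ((hr P hP _ (cosets_smul hA' g⁻¹) h1).mono (hR ⟨P, hP, rfl⟩)).smul g
  rwa [smul_smul, mul_inv_cancel, one_smul] at h2

end word

theorem coset_nonempty {G : Type*} [Group G] {PP : Set (Subgroup G)} {A : Set G}
    (hA : A ∈ cosets PP) : A.Nonempty := by
  obtain ⟨g, P, hP, rfl⟩ := hA
  exact ⟨g • 1, 1, P.one_mem, rfl⟩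

/-- If `PP` is a finite qi-characteristic collection of subgroups of a
finitely generated group `G` and `q : G → H` is a quasi-isometry to a finitely generated
group `H`, then there is a qi-characteristic collection of subgroups `QQ` of `H` such
that `q : (G, PP) → (H, QQ)` is a quasi-isometry of pairs. -/
theorem statement1 {G H : Type*} [Group G] [Group H]
    (S : Set G) (hSfin : S.Finite) (hSgen : Subgroup.closure S = ⊤)
    (T : Set H) (hTfin : T.Finite) (hTgen : Subgroup.closure T = ⊤)
    (PP : Set (Subgroup G)) (hPPfin : PP.Finite)
    (hPPchar : IsQIChar (wordDist S) (cosets PP))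
    (q : G → H) (L C : ℝ) (hq : IsQI (wordDist S) (wordDist T) L C q) :
    ∃ QQ : Set (Subgroup H), IsQIChar (wordDist T) (cosets QQ) ∧
      ∃ L' C' M : ℝ,
        IsQIPair (wordDist S) (wordDist T) L' C' M q (cosets PP) (cosets QQ) := by
  have hX := word_pm hSgen
  have hY := word_pm hTgen
  obtain ⟨r, hr⟩ := uniform_r hSgen hPPfin hPPchar
  obtain ⟨p, Lp, Cp, K, hp, hpq, hqp⟩ := hq.inv hX hY
  -- translates of images are uniformly close to images
  obtain ⟨M, hM⟩ : ∃ M : ℝ, ∀ h : H, ∀ A ∈ cosets PP, ∃ B ∈ cosets PP,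
      HN (wordDist T) M (h • (q '' A)) (q '' B) := by
    obtain ⟨L₂, C₂, hcomp⟩ : ∃ L₂ C₂, ∀ h : H,
        IsQI (wordDist S) (wordDist S) L₂ C₂ (p ∘ ((fun x => h * x) ∘ q)) :=
      ⟨_, _, fun h => hp.comp hX hX ((left_qi hTgen h).comp hX hY hq)⟩
    obtain ⟨M₂, hM₂, hM⟩ := hPPchar.1 L₂ C₂ (hcomp 1).1 (hcomp 1).2.1
    refine ⟨K + (L * M₂ + C), fun h A hA => ?_⟩
    obtain ⟨B, hB, h1⟩ := (hM _ (hcomp h)).2.1 A hA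
    refine ⟨B, hB, ?_⟩
    have h2 := (HN.of_hdist_lt h1).image hq
    have h3 : HN (wordDist T) K (q '' ((p ∘ ((fun x => h * x) ∘ q)) '' A)) (h • (q '' A)) := by
      rw [← Set.image_smul, Set.image_image, Set.image_image]
      exact HN.of_close (fun x => hqp _) A
    exact (h3.symm hY).trans hY h2
  -- uniform closeness
  have hU : ∀ h : H, ∀ A ∈ cosets PP, ∀ A' ∈ cosets PP,
      CE (wordDist T) (h • (q '' A)) (q '' A') →
      HN (wordDist T) (M + (L * r + C)) (h • (q '' A)) (q '' A') := by
    intro h A hA A' hA' hc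
    obtain ⟨B, hB, h1⟩ := hM h A hA
    have h2 : CE (wordDist S) B A' := ((h1.symm hY).ce.trans hY hc).preim hq
    exact h1.trans hY ((hr B hB A' hA' h2).image hq)
  -- finitely many images near a given point
  have hFin : ∀ x : H, ∃ F : Set (Set G), F.Finite ∧ F ⊆ cosets PP ∧
      ∀ h : H, ∀ A ∈ cosets PP, x ∈ h • (q '' A) →
        ∃ B ∈ F, CE (wordDist T) (h • (q '' A)) (q '' B) := by
    intro x
    obtain ⟨F, hF, hFA, hF2⟩ := hPPchar.2.1 {y | wordDist T x (q y) ≤ M} ⟨L * (M + M + C), by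
      intro y hy z hz
      apply hq.down
      have h1 := hY.tri (q y) x (q z)
      rw [hY.symm (q y) x] at h1
      exact h1.trans (add_le_add hy hz)⟩
    refine ⟨F, hF, hFA, fun h A hA hx => ?_⟩
    obtain ⟨B, hB, h1⟩ := hM h A hA
    obtain ⟨_, ⟨b, hb, rfl⟩, h2⟩ := h1.1 x hx
    obtain ⟨B', hB', h3⟩ := hF2 B hB ⟨b, hb, h2⟩
    exact ⟨B', hB', h1.ce.trans hY ((ce_iff.1 h3).image hq)⟩
  -- the stabiliser is close to the image
  have hStab : ∀ A ∈ cosets PP, CE (wordDist T) (q '' A) (stabCE hTgen (q '' A) : Set H) := by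
    intro A hA
    obtain ⟨a, ha⟩ := coset_nonempty hA
    set x := q a with hx
    obtain ⟨F, hF, hFA, hF2⟩ := hFin x
    have : ∀ B : Set G, ∃ k : H, (∃ h : H, CE (wordDist T) (h • (q '' A)) (q '' B)) →
        CE (wordDist T) (k • (q '' A)) (q '' B) := by
      intro B
      by_cases hB : ∃ h : H, CE (wordDist T) (h • (q '' A)) (q '' B)
      · exact ⟨hB.choose, fun _ => hB.choose_spec⟩
      · exact ⟨1, fun h => absurd h hB⟩
    choose k hk using this
    obtain ⟨R, hR⟩ := (hF.image (fun B => wordDist T x (k B))).bddAbove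
    refine ⟨max R (wordDist T x 1 + (M + (L * r + C))), ?_, ?_⟩
    · intro y hy
      have hxy : x ∈ (x * y⁻¹) • (q '' A) := ⟨y, hy, by simp⟩
      obtain ⟨B, hB, h1⟩ := hF2 (x * y⁻¹) A hA hxy
      have h2 := hk B ⟨_, h1⟩
      refine ⟨(x * y⁻¹)⁻¹ * k B, ?_, ?_⟩
      · change CE (wordDist T) (((x * y⁻¹)⁻¹ * k B) • (q '' A)) (q '' A)
        have h3 := (h2.trans hY (h1.symm hY)).smul (x * y⁻¹)⁻¹
        rwa [smul_smul, smul_smul, inv_mul_cancel, one_smul] at h3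
      · refine le_trans ?_ (le_max_left _ _)
        have h4 := hR ⟨B, hB, rfl⟩
        have h5 := word_left (S := T) (x * y⁻¹)⁻¹ x (k B)
        have h6 : (x * y⁻¹)⁻¹ * x = y := by group
        rw [h6] at h5
        rw [h5]
        exact h4
    · intro h hh
      have h1 : CE (wordDist T) (h • (q '' A)) (q '' A) := hh
      obtain ⟨z, hz, h2⟩ := (hU h A hA A hA h1).1 (h * x) ⟨x, ⟨a, ha, rfl⟩, rfl⟩
      refine ⟨z, hz, le_trans ?_ (le_max_right _ _)⟩
      have h3 := hY.tri z (h * x) h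
      have h4 := word_left (S := T) h x 1
      rw [mul_one] at h4
      rw [hY.symm z (h * x)] at h3
      linarith
  obtain ⟨F, hF, hFA, hF2⟩ := hFin 1
  have : ∀ A : Set G, ∃ D : ℝ, A ∈ cosets PP →
      HN (wordDist T) D (q '' A) (stabCE hTgen (q '' A) : Set H) := by
    intro A
    by_cases hA : A ∈ cosets PP
    · obtain ⟨D, hD⟩ := hStab A hA
      exact ⟨D, fun _ => hD⟩
    · exact ⟨0, fun h => absurd h hA⟩
  choose D hD using this
  obtain ⟨R, hR⟩ := (hF.image D).bddAbove
  have hDR : ∀ A ∈ F, HN (wordDist T) R (q '' A) (stabCE hTgen (q '' A) : Set H) :=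
    fun A hA => (hD A (hFA hA)).mono (hR ⟨A, hA, rfl⟩)
  set QQ : Set (Subgroup H) := (fun A : Set G => stabCE hTgen (q '' A)) '' F with hQQ
  have hAB : ∀ A ∈ cosets PP, ∃ B ∈ cosets QQ,
      HN (wordDist T) (max (M + (L * r + C)) M + R) (q '' A) B := by
    intro A hA
    obtain ⟨a, ha⟩ := coset_nonempty hA
    obtain ⟨B, hB, h1⟩ := hF2 (q a)⁻¹ A hA ⟨q a, ⟨a, ha, rfl⟩, by simp⟩
    refine ⟨q a • (stabCE hTgen (q '' B) : Set H), ⟨_, _, ⟨B, hB, rfl⟩, rfl⟩, ?_⟩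
    have h2 := ((hU _ A hA B (hFA hB) h1).mono (le_max_left _ M)).trans hY (hDR B hB)
    have h3 := h2.smul (q a)
    rwa [smul_smul, mul_inv_cancel, one_smul] at h3
  have hBA : ∀ B ∈ cosets QQ, ∃ A ∈ cosets PP,
      HN (wordDist T) (max (M + (L * r + C)) M + R) (q '' A) B := by
    rintro _ ⟨h, _, ⟨A, hA, rfl⟩, rfl⟩
    obtain ⟨B, hB, h1⟩ := hM h A (hFA hA)
    exact ⟨B, hB, ((h1.symm hY).mono (le_max_right _ _)).trans hY ((hDR A hA).smul h)⟩
  refine ⟨QQ, qichar_transfer hX hY hq hPPchar hAB hBA, L, C,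
    |max (M + (L * r + C)) M + R| + 1, hq, ?_, ?_⟩
  · intro A hA
    obtain ⟨B, hB, h⟩ := hAB A hA
    exact ⟨B, hB, h.hdist_lt⟩
  · intro B hB
    obtain ⟨A, hA, h⟩ := hBA B hB
    exact ⟨A, hA, h.hdist_lt⟩
end

section
/- A finite subgroup of a finitely generated infinite group is not qi-subcharacteristic: if G is a finitely generated infinite group (with the word metric of a finite generating set) and P is a finite subgroup of G, then there is no qi-characteristic collection of subgroups of G containing P. -/
open Pointwise
open scoped ENNReal

theorem exists_pow_mem_aux {G : Type*} [Group G] (S : Set G)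
    (hSgen : Subgroup.closure S = ⊤) (x : G) : ∃ n : ℕ, x ∈ (S ∪ S⁻¹) ^ n := by
  have hx : x ∈ Submonoid.closure (S ∪ S⁻¹) := by
    rw [← Subgroup.closure_toSubmonoid, hSgen]; trivial
  induction hx using Submonoid.closure_induction with
  | mem y hy => exact ⟨1, by simpa using hy⟩
  | one => exact ⟨0, by simp⟩
  | mul y z _ _ hy hz =>
    obtain ⟨m, hm⟩ := hy
    obtain ⟨n, hn⟩ := hz
    exact ⟨m + n, by rw [pow_add]; exact Set.mul_mem_mul hm hn⟩

theorem finite_biSup_lt_top_aux {Y : Type*} {A : Set Y} (hA : A.Finite) {f : Y → ℝ≥0∞}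
    (h : ∀ a ∈ A, f a < ⊤) : (⨆ a ∈ A, f a) < ⊤ := by
  have hs : (∑ a ∈ hA.toFinset, f a) < ⊤ :=
    ENNReal.sum_lt_top.2 fun a ha => h a (hA.mem_toFinset.1 ha)
  refine lt_of_le_of_lt (iSup₂_le fun a ha => ?_) hs
  exact Finset.single_le_sum (f := f) (fun _ _ => zero_le) (hA.mem_toFinset.2 ha)

theorem hdist_lt_top_aux {Y : Type*} (d : Y → Y → ℝ) {A B : Set Y} (hA : A.Finite)
    (hB : B.Finite) (hA' : A.Nonempty) (hB' : B.Nonempty) : hdist d A B < ⊤ := by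
  obtain ⟨a0, ha0⟩ := hA'
  obtain ⟨b0, hb0⟩ := hB'
  unfold hdist
  refine max_lt ?_ ?_
  · refine finite_biSup_lt_top_aux hA ?_
    intro a ha
    exact lt_of_le_of_lt (iInf₂_le b0 hb0) ENNReal.ofReal_lt_top
  · refine finite_biSup_lt_top_aux hB ?_
    intro b hb
    exact lt_of_le_of_lt (iInf₂_le a0 ha0) ENNReal.ofReal_lt_top

/-- A finite subgroup of a finitely generated infinite group is not
qi-subcharacteristic: it belongs to no qi-characteristic collection of subgroups. -/
theorem statement4 {G : Type*} [Group G] [Infinite G]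
    (S : Set G) (hSfin : S.Finite) (hSgen : Subgroup.closure S = ⊤)
    (P : Subgroup G) (hPfin : (P : Set G).Finite) :
    ¬ ∃ PP : Set (Subgroup G), P ∈ PP ∧ IsQIChar (wordDist S) (cosets PP) := by
  rintro ⟨PP, hP, -, -, h3⟩
  have hmem : ∀ g : G, g • (P : Set G) ∈ cosets PP := fun g => ⟨g, P, hP, rfl⟩
  have hne : ∀ g : G, (g • (P : Set G)).Nonempty := fun g => ⟨g • 1, 1, P.one_mem, rfl⟩
  have hfin : ∀ g : G, (g • (P : Set G)).Finite := fun g => hPfin.smul_set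
  have htop : ∀ g h : G, hdist (wordDist S) (g • (P : Set G)) (h • (P : Set G)) < ⊤ :=
    fun g h => hdist_lt_top_aux _ (hfin g) (hfin h) (hne g) (hne h)
  obtain ⟨r, hr, hb⟩ := h3 _ (hmem 1)
  obtain ⟨N, hN⟩ := ENNReal.exists_nat_gt hr.ne
  have hT : (S ∪ S⁻¹).Finite := hSfin.union hSfin.inv
  have hpow : ∀ n : ℕ, ((S ∪ S⁻¹) ^ n).Finite := by
    intro n
    induction n with
    | zero => simp
    | succ n ih => rw [pow_succ]; exact ih.mul hT
  have hbig : ((P : Set G) * ⋃ n ∈ Set.Iic N, (S ∪ S⁻¹) ^ n).Finite :=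
    hPfin.mul ((Set.finite_Iic N).biUnion fun n _ => hpow n)
  refine Set.infinite_univ (hbig.subset ?_)
  intro g _
  have h1 := hb _ (hmem 1) _ (hmem g) (htop 1 1) (htop 1 g)
  have hg : g ∈ g • (P : Set G) := ⟨1, P.one_mem, by simp⟩
  have h2 : (⨅ a ∈ (1 : G) • (P : Set G), ENNReal.ofReal (wordDist S a g)) < N := by
    refine lt_of_le_of_lt (le_trans ?_ h1) hN
    unfold hdist
    exact le_trans (le_iSup₂ (f := fun b (_ : b ∈ g • (P : Set G)) =>
      ⨅ a ∈ (1 : G) • (P : Set G), ENNReal.ofReal (wordDist S a b)) g hg) (le_max_right _ _)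
  simp only [iInf_lt_iff] at h2
  obtain ⟨a, ha, h2⟩ := h2
  rw [one_smul] at ha
  have h4 : a⁻¹ * g ∈ (S ∪ S⁻¹) ^ (sInf {n : ℕ | a⁻¹ * g ∈ (S ∪ S⁻¹) ^ n}) :=
    Nat.sInf_mem (s := {n : ℕ | a⁻¹ * g ∈ (S ∪ S⁻¹) ^ n}) (exists_pow_mem_aux S hSgen _)
  unfold wordDist at h2
  rw [ENNReal.ofReal_natCast] at h2
  have h5 := Nat.cast_lt.1 h2
  refine ⟨a, ha, a⁻¹ * g, ?_, by simp⟩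
  exact Set.mem_biUnion (x := sInf {n : ℕ | a⁻¹ * g ∈ (S ∪ S⁻¹) ^ n}) h5.le h4
end

section
/- Let n ≥ 2 and let G = BS(1,n) be the Baumslag–Solitar group with presentation ⟨a,t ∣ t a t⁻¹ = aⁿ⟩. Then the commensurator of the cyclic subgroup ⟨a⟩ in G is all of G, and ⟨a⟩ has infinite index in its commensurator Comm_G(⟨a⟩). -/
/-- Generators of the Baumslag–Solitar group `BS(1,n)`. -/
inductive BSGen : Type
  | a : BSGen
  | t : BSGen

/-- The single relator `t a t⁻¹ a⁻ⁿ` of `BS(1,n) = ⟨a, t ∣ t a t⁻¹ = aⁿ⟩`. -/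
def bsRels (n : ℕ) : Set (FreeGroup BSGen) :=
  {FreeGroup.of BSGen.t * FreeGroup.of BSGen.a * (FreeGroup.of BSGen.t)⁻¹ *
    (FreeGroup.of BSGen.a ^ n)⁻¹}

open Pointwise in
lemma bs_relIndex {G : Type*} [Group G] (g : G) (n : ℕ) (hn : 2 ≤ n) :
    (Subgroup.zpowers (g ^ n)).relIndex (Subgroup.zpowers g) ≠ 0 := by
  let f : Fin n → (Subgroup.zpowers g) ⧸ ((Subgroup.zpowers (g ^ n)).subgroupOf
      (Subgroup.zpowers g)) := fun i =>
    QuotientGroup.mk ⟨g ^ (i : ℕ), Subgroup.npow_mem_zpowers g i⟩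
  have hf : Function.Surjective f := by
    intro q
    obtain ⟨⟨x, hx⟩, rfl⟩ := QuotientGroup.mk_surjective q
    obtain ⟨k, rfl⟩ := hx
    have h0 : (0 : ℤ) ≤ k % n := Int.emod_nonneg _ (by omega)
    have h1 : k % n < n := Int.emod_lt_of_pos _ (by omega)
    refine ⟨⟨(k % n).toNat, by omega⟩, ?_⟩
    refine QuotientGroup.eq.2 ?_
    rw [Subgroup.mem_subgroupOf]
    refine ⟨k / n, ?_⟩
    simp only [Subgroup.coe_mul, Subgroup.coe_inv]
    rw [← zpow_natCast g n, ← zpow_mul, ← zpow_natCast g, Int.toNat_of_nonneg h0, ← zpow_neg,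
      ← zpow_add]
    congr 1
    have := Int.emod_add_mul_ediv k n
    linarith
  have : Finite ((Subgroup.zpowers g) ⧸ ((Subgroup.zpowers (g ^ n)).subgroupOf
      (Subgroup.zpowers g))) := Finite.of_surjective f hf
  exact Subgroup.index_ne_zero_of_finite

open Pointwise in
lemma bs_conj {G : Type*} [Group G] (g x : G) :
    ConjAct.toConjAct g • Subgroup.zpowers x = Subgroup.zpowers (g * x * g⁻¹) := by
  have := MonoidHom.map_zpowers (MulDistribMulAction.toMonoidHom G (ConjAct.toConjAct g)) x
  exact this

lemma bs_rel (n : ℕ) : PresentedGroup.of (rels := bsRels n) BSGen.t *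
    PresentedGroup.of BSGen.a * (PresentedGroup.of BSGen.t)⁻¹ = PresentedGroup.of BSGen.a ^ n := by
  have h := PresentedGroup.one_of_mem (rels := bsRels n) (x := _) (Set.mem_singleton _)
  rw [← mul_inv_eq_one]
  simpa using! h

lemma bs_comm (n : ℕ) (hn : 2 ≤ n) : Subgroup.Commensurable.commensurator
        (Subgroup.zpowers (PresentedGroup.of (rels := bsRels n) BSGen.a)) = ⊤ := by
  rw [eq_top_iff]
  rintro x -
  refine PresentedGroup.generated_by _ _ ?_ x
  rintro (_ | _)
  · rw [Subgroup.Commensurable.commensurator_mem_iff, bs_conj]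
    simpa using Subgroup.Commensurable.refl _
  · rw [Subgroup.Commensurable.commensurator_mem_iff, bs_conj, bs_rel]
    refine ⟨bs_relIndex _ n hn, ?_⟩
    rw [Subgroup.relIndex_eq_one.2]
    · exact one_ne_zero
    · rw [Subgroup.zpowers_le]
      exact Subgroup.npow_mem_zpowers _ _

def bsF : BSGen → Multiplicative ℤ
  | BSGen.a => 1
  | BSGen.t => Multiplicative.ofAdd 1

lemma bs_lift (n : ℕ) : ∀ r ∈ bsRels n, FreeGroup.lift bsF r = 1 := by
  rintro r rfl
  simp [bsF]

lemma bs_index (n : ℕ) :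
    (Subgroup.zpowers (PresentedGroup.of (rels := bsRels n) BSGen.a)).index = 0 := by
  let φ := PresentedGroup.toGroup (bs_lift n)
  have hs : φ.range = ⊤ := by
    rw [MonoidHom.range_eq_top]
    intro z
    refine ⟨PresentedGroup.of BSGen.t ^ (Multiplicative.toAdd z), ?_⟩
    rw [map_zpow, PresentedGroup.toGroup.of]
    simp [bsF, ← ofAdd_zsmul]
  have hk : φ.ker.index = 0 := by
    rw [Subgroup.index_ker, hs]
    exact Nat.card_eq_zero_of_infinite
  have hle : Subgroup.zpowers (PresentedGroup.of (rels := bsRels n) BSGen.a) ≤ φ.ker := by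
    rw [Subgroup.zpowers_le, MonoidHom.mem_ker, PresentedGroup.toGroup.of]
    rfl
  have := Subgroup.index_dvd_of_le hle
  rw [hk] at this
  exact zero_dvd_iff.1 this

/-- For `n ≥ 2` and `G = BS(1,n) = ⟨a, t ∣ t a t⁻¹ = aⁿ⟩`, the
commensurator of the cyclic subgroup `⟨a⟩` in `G` is all of `G`, and `⟨a⟩` has
infinite index in its commensurator (infinite index being `Subgroup.index = 0`). -/
theorem statement6 (n : ℕ) (hn : 2 ≤ n) :
    Subgroup.Commensurable.commensurator
        (Subgroup.zpowers (PresentedGroup.of (rels := bsRels n) BSGen.a)) = ⊤ ∧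
      ((Subgroup.zpowers (PresentedGroup.of (rels := bsRels n) BSGen.a)).subgroupOf
          (Subgroup.Commensurable.commensurator
            (Subgroup.zpowers (PresentedGroup.of (rels := bsRels n) BSGen.a)))).index
        = 0 := by
  refine ⟨bs_comm n hn, ?_⟩
  rw [bs_comm n hn]
  exact (Subgroup.relIndex_top_right _).trans (bs_index n)
end

section
/- Let H = F(a,b) be the free group on two generators a, b, and let T = {b} ∪ {aᵏ : k ∈ ℤ, k ≠ 0} be the (infinite) generating set of H consisting of b together with all nontrivial powers of a. Then for every integer n ≥ 1, the word length of bⁿ with respect to T equals n; that is, dist_{(H,T)}(e, bⁿ) = n. -/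
open Pointwise

/-- The generators `a`, `b` of the free group `F(a,b)`. -/
inductive Gen : Type
  | a : Gen
  | b : Gen

/-- The infinite generating set `T = {b} ∪ {aᵏ : k ∈ ℤ, k ≠ 0}` of the free group
`F(a,b)`. -/
def Tset : Set (FreeGroup Gen) :=
  {FreeGroup.of Gen.b} ∪ {x | ∃ k : ℤ, k ≠ 0 ∧ x = FreeGroup.of Gen.a ^ k}

noncomputable def bExp : FreeGroup Gen →* Multiplicative ℤ :=
  FreeGroup.lift (fun g => match g with
    | Gen.a => 1
    | Gen.b => Multiplicative.ofAdd 1)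

theorem bExp_a : bExp (FreeGroup.of Gen.a) = 1 := by simp [bExp]

theorem bExp_b : bExp (FreeGroup.of Gen.b) = Multiplicative.ofAdd 1 := by simp [bExp]

theorem bExp_T {x : FreeGroup Gen} (hx : x ∈ Tset) : |(bExp x).toAdd| ≤ 1 := by
  rcases hx with hx | ⟨k, -, rfl⟩
  · rw [Set.mem_singleton_iff.1 hx, bExp_b]; simp
  · rw [map_zpow, bExp_a]; simp

theorem bExp_pow (m : ℕ) : ∀ x : FreeGroup Gen, x ∈ (Tset ∪ Tset⁻¹) ^ m →
    |(bExp x).toAdd| ≤ m := by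
  induction m with
  | zero =>
    intro x hx
    rw [pow_zero, Set.mem_one] at hx
    subst hx
    simp
  | succ m ih =>
    intro x hx
    rw [pow_succ] at hx
    obtain ⟨y, hy, z, hz, rfl⟩ := Set.mem_mul.1 hx
    have h1 := ih y hy
    have h2 : |(bExp z).toAdd| ≤ 1 := by
      rcases hz with hz | hz
      · exact bExp_T hz
      · have := bExp_T (Set.mem_inv.1 hz)
        rwa [map_inv, toAdd_inv, abs_neg] at this
    rw [map_mul, toAdd_mul]
    push_cast
    exact (abs_add_le _ _).trans (add_le_add h1 h2)

/-- In the free group `H = F(a,b)` with the (infinite) generating set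
`T = {b} ∪ {aᵏ : k ≠ 0}`, the word length of `bⁿ` with respect to `T` equals `n` for
every `n ≥ 1`. -/
theorem statement7 (n : ℕ) (hn : 1 ≤ n) :
    wordDist Tset 1 (FreeGroup.of Gen.b ^ n) = (n : ℝ) := by
  have hmem : n ∈ {m : ℕ | (1 : FreeGroup Gen)⁻¹ * FreeGroup.of Gen.b ^ n ∈
      (Tset ∪ Tset⁻¹) ^ m} := by
    simp only [Set.mem_setOf_eq, inv_one, one_mul]
    exact Set.pow_mem_pow (Or.inl (Or.inl rfl))
  unfold wordDist
  congr 1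
  apply le_antisymm (Nat.sInf_le hmem)
  have h := bExp_pow _ _ (Nat.sInf_mem ⟨n, hmem⟩)
  rw [inv_one, one_mul, map_pow, bExp_b, toAdd_pow, toAdd_ofAdd] at h
  simp only [nsmul_eq_mul, mul_one, Nat.abs_cast, Nat.cast_le] at h
  simpa using h
end
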